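/- The normalizing constants C_{j,n} in the dual basis r_j^n = C_{j,n}(ad e)^n r_j (characterized by (r^i_m | r^n_j) = δ_{m,n}δ_{i,j}) are given by: C_{j,n} = 1/((m!)²·binom(2α_j,m)) if n = 2m is even, and C_{j,n} = −s(j)/((m+1)!·m!·binom(2α_j,m+1)) if n = 2m+1 is odd. -/

import Mathlib

open Finsupp TensorProduct
open scoped Classical

noncomputable section

/-- sign $(-1)^{p(a)p(b)}$ expressed through the parity signs ζa, ζb ∈ {±1}. -/
def sgn2 (za zb : ℂ) : ℂ := (1 + za + zb - za * zb) / 2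

/-- `homIn ev odd a ζ` : `a` is homogeneous of parity sign `ζ`. -/
def homIn {P : Type*} [AddCommGroup P] [Module ℂ P]
    (ev odd : Submodule ℂ P) (a : P) (z : ℂ) : Prop :=
  (z = 1 ∧ a ∈ ev) ∨ (z = -1 ∧ a ∈ odd)

/-- A finite simple Lie superalgebra over ℂ with a subalgebra span{E,e,H,f,F} ≅ osp(1|2),
a compatible even nondegenerate supersymmetric invariant bilinear form, the ad(H/2)-eigenspace
½ℤ-grading, and dual bases of g^f = ker(ad f) and g^e = ker(ad e). -/
structure SS where
  g : Type
  [iag : AddCommGroup g]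
  [img : Module ℂ g]
  [ifd : FiniteDimensional ℂ g]
  gev : Submodule ℂ g
  godd : Submodule ℂ g
  gparity : IsCompl gev godd
  br : g →ₗ[ℂ] g →ₗ[ℂ] g
  br_parity : ∀ a b za zb, homIn gev godd a za → homIn gev godd b zb →
    homIn gev godd (br a b) (za * zb)
  br_skew : ∀ a b za zb, homIn gev godd a za → homIn gev godd b zb →
    br a b = -(sgn2 za zb) • br b a
  br_jacobi : ∀ a b c za zb, homIn gev godd a za → homIn gev godd b zb →
    br a (br b c) = br (br a b) c + sgn2 za zb • br b (br a c)
  simple : ∀ I : Submodule ℂ g, (∀ a, ∀ x ∈ I, br a x ∈ I) → I = ⊥ ∨ I = ⊤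
  nontriv : ∃ x : g, x ≠ 0
  B : g →ₗ[ℂ] g →ₗ[ℂ] ℂ
  B_supersym : ∀ a b za zb, homIn gev godd a za → homIn gev godd b zb →
    B a b = sgn2 za zb * B b a
  B_even : ∀ a ∈ gev, ∀ b ∈ godd, B a b = 0
  B_invariant : ∀ a b c, B (br a b) c = B a (br b c)
  B_nondeg : ∀ a, (∀ b, B a b = 0) → a = 0
  /-- the osp(1|2)-subalgebra: E, e, H, f, F -/
  Ee : g
  ee : g
  He : g
  fe : g
  Fe : g
  E_even : Ee ∈ gev
  H_even : He ∈ gev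
  F_even : Fe ∈ gev
  e_odd : ee ∈ godd
  f_odd : fe ∈ godd
  tripleHE : br He Ee = (2 : ℂ) • Ee
  tripleHF : br He Fe = (-2 : ℂ) • Fe
  tripleEF : br Ee Fe = He
  ospHe : br He ee = ee
  ospHf : br He fe = -fe
  ospee : br ee ee = (2 : ℂ) • Ee
  ospff : br fe fe = (-2 : ℂ) • Fe
  ospef : br ee fe = -He
  ospFe : br Fe ee = fe
  ospEf : br Ee fe = ee
  BHH : B He He = 2
  BEF : B Ee Fe = 1
  Bef : B ee fe = -2
  /-- the ad(H/2)-eigenspace decomposition g = ⊕_{i ∈ ½ℤ} g(i) -/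
  gr : ℚ → Submodule ℂ g
  gr_eigen : ∀ i : ℚ, ∀ x ∈ gr i, br He x = ((2 * i : ℚ) : ℂ) • x
  gr_halfint : ∀ i : ℚ, (¬ ∃ m : ℤ, i = (m : ℚ) / 2) → gr i = ⊥
  gr_top : (⨆ i : ℚ, gr i) = ⊤
  /-- index set of the bases of g^f and g^e -/
  Jf : Type
  [iJf : Fintype Jf]
  [idJf : DecidableEq Jf]
  /-- basis r_j of g^f = ker ad f -/
  rlo : Jf → g
  /-- basis r^j of g^e = ker ad e -/
  rhi : Jf → g
  sj : Jf → ℂ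
  /-- α_j, the ad(H/2)-weight of r^j -/
  αw : Jf → ℚ
  /-- 2α_j -/
  deg2 : Jf → ℕ
  deg2_eq : ∀ j, (deg2 j : ℚ) = 2 * αw j
  rlo_parity : ∀ j, homIn gev godd (rlo j) (sj j)
  rhi_parity : ∀ j, homIn gev godd (rhi j) (sj j)
  rlo_ker : ∀ j, br fe (rlo j) = 0
  rhi_ker : ∀ j, br ee (rhi j) = 0
  rlo_wt : ∀ j, rlo j ∈ gr (-(αw j))
  rhi_wt : ∀ j, rhi j ∈ gr (αw j)
  rlo_indep : LinearIndependent ℂ rlo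
  rhi_indep : LinearIndependent ℂ rhi
  rlo_span : ∀ x, br fe x = 0 → x ∈ Submodule.span ℂ (Set.range rlo)
  rhi_span : ∀ x, br ee x = 0 → x ∈ Submodule.span ℂ (Set.range rhi)
  pairrr : ∀ i j, B (rhi i) (rlo j) = if i = j then 1 else 0
  /-- r^i_m = (ad f)^m r^i -/
  rup : Jf → ℕ → g
  rup_def : ∀ j m, rup j m = ((br fe : Module.End ℂ g) ^ m) (rhi j)
  /-- normalizing constants C_{j,n} -/
  Cjn : Jf → ℕ → ℂ
  /-- dual basis r_j^n = C_{j,n} (ad e)^n r_j -/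
  rdn : Jf → ℕ → g
  rdn_def : ∀ j n, n ≤ 2 * deg2 j →
    rdn j n = Cjn j n • ((br ee : Module.End ℂ g) ^ n) (rlo j)
  rdn_zero : ∀ j n, 2 * deg2 j < n → rdn j n = 0
  dualpair : ∀ i m j n, m ≤ 2 * deg2 i → n ≤ 2 * deg2 j →
    B (rup i m) (rdn j n) = if i = j ∧ m = n then 1 else 0

attribute [instance] SS.iag SS.img SS.ifd SS.iJf SS.idJf

/-- The index set J^f_t = {(i,m) : r_i^m ∈ g(t), r^i_m ∈ g(-t)}, as a finset. -/
def SS.JfSet (S : SS) (t : ℚ) : Finset (S.Jf × ℕ) :=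
  ((Finset.univ : Finset S.Jf) ×ˢ
      Finset.range (2 * ((Finset.univ : Finset S.Jf).sup S.deg2) + 1)).filter
    (fun p => p.2 ≤ 2 * S.deg2 p.1 ∧ S.rdn p.1 p.2 ∈ S.gr t ∧ S.rup p.1 p.2 ∈ S.gr (-t))

end

noncomputable section

/-!
Let `v` be killed by the odd lowering operator `f` and have weight `-d`. As `⁅e ^ 2, f⁆ = e`, we get
`f e ^ (n + 2) = e ^ 2 f e ^ n - e ^ (n + 1)`, so lowering `e ^ (2 * m + 1) v` produces the factor
`d - m` and lowering `e ^ (2 * m + 2) v` the factor `-(m + 1)`. With the falling factorial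
`(d)_m = d (d - 1) ⋯ (d - m + 1)`, the product of these factors gives
`f ^ n (e ^ n v) = (-1) ^ m m! (d)_m v` for `n = 2 * m` and
`f ^ n (e ^ n v) = (-1) ^ m m! (d)_{m + 1} v` for `n = 2 * m + 1`.

On the other side of the form, `(ad f) ^ 2 = -ad F` is skew-adjoint because `F` is even, so moving
`(ad f) ^ (2 * m)` across costs `(-1) ^ m`, which cancels the sign above; one further odd `ad f`
costs minus the parity sign of the vector it leaves. With `d = 2 α_j`, the constant `C_{j,n}` is the
inverse of the resulting value of `((ad f) ^ n r^j | (ad e) ^ n r_j)`.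
-/

lemma descPochhammer_eval_natCast_eq_factorial_mul_choose {R : Type*} [CommRing R] (d m : ℕ) :
    (descPochhammer R m).eval (d : R) = m.factorial * d.choose m := by
  rw [descPochhammer_eval_eq_descFactorial, Nat.descFactorial_eq_factorial_mul_choose,
    Nat.cast_mul]

section OspModule

variable {R V : Type*} [CommRing R] [AddCommGroup V] [Module R V]
  {e f : Module.End R V} {d : R} {v : V}

/-- A lowest weight vector `v` of weight `-d` for the odd generators `e`, `f` of `osp(1|2)`.
The Cartan operator is eliminated through `h = -(e * f + f * e)`: the relation `⁅h, e⁆ = e` becomes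
`⁅e ^ 2, f⁆ = e`, and `h v = -d v` becomes `f (e v) = d v`. -/
structure IsOspLowestWeightVector (e f : Module.End R V) (d : R) (v : V) : Prop where
  lie_sq : ⁅e ^ 2, f⁆ = e
  lower_eq_zero : f v = 0
  lower_raise : f (e v) = d • v

lemma mul_pow_add_two_of_lie_sq_eq {A : Type*} [Ring A] {a b : A} (h : ⁅a ^ 2, b⁆ = a) (n : ℕ) :
    b * a ^ (n + 2) = a ^ 2 * (b * a ^ n) - a ^ (n + 1) := by
  have hba : b * a ^ 2 = a ^ 2 * b - a := by
    rw [eq_sub_iff_add_eq', ← eq_sub_iff_add_eq, ← Ring.lie_def, h]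
  rw [add_comm n 2, pow_add, ← mul_assoc, hba, sub_mul, mul_assoc, ← pow_succ']

namespace IsOspLowestWeightVector

lemma lower_pow_add_two (h : IsOspLowestWeightVector e f d v) (n : ℕ) :
    f ((e ^ (n + 2)) v) = (e ^ 2) (f ((e ^ n) v)) - (e ^ (n + 1)) v :=
  congr($(mul_pow_add_two_of_lie_sq_eq h.lie_sq n) v)

lemma lower_pow_odd (h : IsOspLowestWeightVector e f d v) (m : ℕ) :
    f ((e ^ (2 * m + 1)) v) = (d - m) • (e ^ (2 * m)) v := by
  induction m with
  | zero => simpa using h.lower_raise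
  | succ m ih =>
    rw [show 2 * (m + 1) + 1 = 2 * m + 1 + 2 by ring, h.lower_pow_add_two, ih, map_smul,
      ← Module.End.mul_apply, ← pow_add, show 2 + 2 * m = 2 * (m + 1) by ring]
    push_cast
    module

lemma lower_pow_even (h : IsOspLowestWeightVector e f d v) (m : ℕ) :
    f ((e ^ (2 * m + 2)) v) = (-((m : R) + 1)) • (e ^ (2 * m + 1)) v := by
  induction m with
  | zero => simp [h.lower_pow_add_two, h.lower_eq_zero]
  | succ m ih =>
    rw [h.lower_pow_add_two, mul_add_one, ih, map_smul, ← Module.End.mul_apply, ← pow_add,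
      show 2 + (2 * m + 1) = 2 * m + 2 + 1 by ring]
    push_cast
    module

lemma lower_pow_raise_pow_odd_eq (h : IsOspLowestWeightVector e f d v) (m : ℕ) :
    (f ^ (2 * m + 1)) ((e ^ (2 * m + 1)) v) = (d - m) • (f ^ (2 * m)) ((e ^ (2 * m)) v) := by
  rw [pow_succ f, Module.End.mul_apply, h.lower_pow_odd, map_smul]

lemma lower_pow_raise_pow_even_eq (h : IsOspLowestWeightVector e f d v) (m : ℕ) :
    (f ^ (2 * m + 2)) ((e ^ (2 * m + 2)) v) =
      (-((m : R) + 1)) • (f ^ (2 * m + 1)) ((e ^ (2 * m + 1)) v) := by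
  rw [pow_succ f, Module.End.mul_apply, h.lower_pow_even, map_smul]

lemma lower_pow_raise_pow_even (h : IsOspLowestWeightVector e f d v) (m : ℕ) :
    (f ^ (2 * m)) ((e ^ (2 * m)) v) =
      ((-1) ^ m * (m.factorial * (descPochhammer R m).eval d)) • v := by
  induction m with
  | zero => simp
  | succ m ih =>
    rw [mul_add_one, h.lower_pow_raise_pow_even_eq, h.lower_pow_raise_pow_odd_eq, ih, smul_smul,
      smul_smul, descPochhammer_succ_eval, Nat.factorial_succ]
    push_cast
    congr 1
    ring

lemma lower_pow_raise_pow_odd (h : IsOspLowestWeightVector e f d v) (m : ℕ) :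
    (f ^ (2 * m + 1)) ((e ^ (2 * m + 1)) v) =
      ((-1) ^ m * (m.factorial * (descPochhammer R (m + 1)).eval d)) • v := by
  rw [h.lower_pow_raise_pow_odd_eq, h.lower_pow_raise_pow_even, smul_smul,
    descPochhammer_succ_eval]
  congr 1
  ring

end IsOspLowestWeightVector

section Pairing

variable {B : V →ₗ[R] V →ₗ[R] R} {s : R} {u : V}

lemma apply_pow_of_isSkewAdjoint {T : Module.End R V} (hT : B.IsSkewAdjoint T) (m : ℕ) (x y : V) :
    B ((T ^ m) x) y = (-1) ^ m * B x ((T ^ m) y) := by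
  induction m generalizing y with
  | zero => simp
  | succ m ih =>
    calc B ((T ^ (m + 1)) x) y
        = B ((T ^ m) x) (-T y) := by rw [pow_succ', Module.End.mul_apply, hT, Pi.neg_apply]
      _ = (-1) ^ m * B x (-(T ^ (m + 1)) y) := by
        rw [ih, map_neg, pow_succ T, Module.End.mul_apply]
      _ = (-1) ^ (m + 1) * B x ((T ^ (m + 1)) y) := by
        rw [map_neg, pow_succ (-1 : R), mul_neg_one, neg_mul, mul_neg]

lemma apply_pow_even_of_isSkewAdjoint_sq (hf : B.IsSkewAdjoint (f ^ 2 : Module.End R V)) (m : ℕ)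
    (x y : V) : B ((f ^ (2 * m)) x) y = (-1) ^ m * B x ((f ^ (2 * m)) y) := by
  rw [pow_mul]
  exact apply_pow_of_isSkewAdjoint hf m x y

lemma apply_pow_odd_of_isSkewAdjoint_sq (hf : B.IsSkewAdjoint (f ^ 2 : Module.End R V))
    (hu : ∀ y, B (f u) y = -s * B u (f y)) (m : ℕ) (y : V) :
    B ((f ^ (2 * m + 1)) u) y = -s * ((-1) ^ m * B u ((f ^ (2 * m + 1)) y)) := by
  rw [pow_succ, Module.End.mul_apply, apply_pow_even_of_isSkewAdjoint_sq hf, hu,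
    ← Module.End.mul_apply f, ← pow_succ', ← pow_succ]
  ring

lemma IsOspLowestWeightVector.pairing_even (h : IsOspLowestWeightVector e f d v)
    (hf : B.IsSkewAdjoint (f ^ 2 : Module.End R V)) (m : ℕ) :
    B ((f ^ (2 * m)) u) ((e ^ (2 * m)) v) =
      m.factorial * (descPochhammer R m).eval d * B u v := by
  rw [apply_pow_even_of_isSkewAdjoint_sq hf, h.lower_pow_raise_pow_even, map_smul, smul_eq_mul,
    mul_assoc ((-1) ^ m), ← mul_assoc, ← mul_pow, neg_one_mul, neg_neg, one_pow, one_mul]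

lemma IsOspLowestWeightVector.pairing_odd (h : IsOspLowestWeightVector e f d v)
    (hf : B.IsSkewAdjoint (f ^ 2 : Module.End R V)) (hu : ∀ y, B (f u) y = -s * B u (f y)) (m : ℕ) :
    B ((f ^ (2 * m + 1)) u) ((e ^ (2 * m + 1)) v) =
      -s * (m.factorial * (descPochhammer R (m + 1)).eval d * B u v) := by
  rw [apply_pow_odd_of_isSkewAdjoint_sq hf hu, h.lower_pow_raise_pow_odd, map_smul,
    smul_eq_mul, mul_assoc ((-1) ^ m), ← mul_assoc ((-1) ^ m), ← mul_pow, neg_one_mul, neg_neg,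
    one_pow, one_mul]

lemma IsOspLowestWeightVector.pairing_even_natCast {d : ℕ}
    (h : IsOspLowestWeightVector e f (d : R) v) (hf : B.IsSkewAdjoint (f ^ 2 : Module.End R V))
    (m : ℕ) :
    B ((f ^ (2 * m)) u) ((e ^ (2 * m)) v) =
      (m.factorial : R) ^ 2 * d.choose m * B u v := by
  rw [h.pairing_even hf, descPochhammer_eval_natCast_eq_factorial_mul_choose]
  ring

lemma IsOspLowestWeightVector.pairing_odd_natCast {d : ℕ}
    (h : IsOspLowestWeightVector e f (d : R) v) (hf : B.IsSkewAdjoint (f ^ 2 : Module.End R V))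
    (hu : ∀ y, B (f u) y = -s * B u (f y)) (m : ℕ) :
    B ((f ^ (2 * m + 1)) u) ((e ^ (2 * m + 1)) v) =
      -s * ((m + 1).factorial * m.factorial * d.choose (m + 1) * B u v) := by
  rw [h.pairing_odd hf hu, descPochhammer_eval_natCast_eq_factorial_mul_choose]
  ring

end Pairing

end OspModule

lemma sgn2_one_left (z : ℂ) : sgn2 1 z = 1 := by
  unfold sgn2
  ring

lemma sgn2_neg_one_left (z : ℂ) : sgn2 (-1) z = z := by
  unfold sgn2
  ring

namespace SS

variable {S : SS} {a b : S.g} {z : ℂ}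

variable (S) in
/-- The adjoint representation, with values in endomorphisms so that `ad a` has powers. -/
abbrev ad : S.g →ₗ[ℂ] Module.End ℂ S.g := S.br

lemma homIn_of_mem_gev (ha : a ∈ S.gev) : homIn S.gev S.godd a 1 := Or.inl ⟨rfl, ha⟩

lemma homIn_of_mem_godd (ha : a ∈ S.godd) : homIn S.gev S.godd a (-1) := Or.inr ⟨rfl, ha⟩

lemma mul_self_eq_one_of_homIn (ha : homIn S.gev S.godd a z) : z * z = 1 := by
  rcases ha with ⟨rfl, -⟩ | ⟨rfl, -⟩ <;> norm_num

lemma br_skew_of_mem_gev (ha : a ∈ S.gev) (x : S.g) : S.br a x = -S.br x a := by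
  obtain ⟨y, hy, w, hw, rfl⟩ : ∃ y ∈ S.gev, ∃ w ∈ S.godd, y + w = x :=
    Submodule.mem_sup.1 (S.gparity.sup_eq_top ▸ Submodule.mem_top)
  have hay := S.br_skew _ _ _ _ (homIn_of_mem_gev ha) (homIn_of_mem_gev hy)
  have haw := S.br_skew _ _ _ _ (homIn_of_mem_gev ha) (homIn_of_mem_godd hw)
  rw [sgn2_one_left, neg_one_smul] at hay haw
  rw [map_add, hay, haw, map_add, LinearMap.add_apply, neg_add]

lemma isSkewAdjoint_ad_of_mem_gev (ha : a ∈ S.gev) : S.B.IsSkewAdjoint (S.ad a) := fun x y => by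
  rw [br_skew_of_mem_gev ha, map_neg, LinearMap.neg_apply, S.B_invariant, Pi.neg_apply, map_neg]

lemma B_ad_of_mem_godd (ha : a ∈ S.godd) (hb : homIn S.gev S.godd b z) (y : S.g) :
    S.B (S.ad a b) y = -z * S.B b (S.ad a y) := by
  rw [S.br_skew _ _ _ _ (homIn_of_mem_godd ha) hb, sgn2_neg_one_left, map_smul,
    LinearMap.smul_apply, S.B_invariant, smul_eq_mul]

lemma lie_ad_of_mem_gev (ha : a ∈ S.gev) (hb : homIn S.gev S.godd b z) :
    ⁅S.ad a, S.ad b⁆ = S.ad (S.br a b) := by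
  ext x
  have jacobi := S.br_jacobi _ _ x _ _ (homIn_of_mem_gev ha) hb
  rw [sgn2_one_left, one_smul] at jacobi
  exact sub_eq_of_eq_add jacobi

lemma ad_mul_ad_of_mem_godd (ha : a ∈ S.godd) (hb : b ∈ S.godd) :
    S.ad a * S.ad b = S.ad (S.br a b) - S.ad b * S.ad a := by
  ext x
  have jacobi := S.br_jacobi _ _ x _ _ (homIn_of_mem_godd ha) (homIn_of_mem_godd hb)
  rwa [sgn2_neg_one_left, neg_one_smul, ← sub_eq_add_neg] at jacobi

lemma ad_sq_of_br_self (ha : a ∈ S.godd) (haa : S.br a a = (2 : ℂ) • b) : S.ad a ^ 2 = S.ad b := by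
  have h := ad_mul_ad_of_mem_godd ha ha
  rw [haa, map_smul, eq_sub_iff_add_eq, ← two_smul ℂ, ← sq] at h
  exact smul_right_injective _ two_ne_zero h

variable (S)

lemma ad_ee_sq : S.ad S.ee ^ 2 = S.ad S.Ee := ad_sq_of_br_self S.e_odd S.ospee

lemma ad_fe_sq : S.ad S.fe ^ 2 = S.ad (-S.Fe) :=
  ad_sq_of_br_self S.f_odd (by rw [S.ospff, smul_neg, neg_smul])

lemma isSkewAdjoint_ad_fe_sq : S.B.IsSkewAdjoint (S.ad S.fe ^ 2 : Module.End ℂ S.g) := by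
  rw [ad_fe_sq]
  exact isSkewAdjoint_ad_of_mem_gev (S.gev.neg_mem S.F_even)

lemma br_He_rlo (j : S.Jf) : S.br S.He (S.rlo j) = -(S.deg2 j : ℂ) • S.rlo j := by
  have hdeg : (S.deg2 j : ℂ) = 2 * (S.αw j : ℂ) := by exact_mod_cast S.deg2_eq j
  rw [S.gr_eigen _ _ (S.rlo_wt j), hdeg]
  push_cast
  rw [mul_neg]

lemma isOspLowestWeightVector_rlo (j : S.Jf) :
    IsOspLowestWeightVector (S.ad S.ee) (S.ad S.fe) (S.deg2 j : ℂ) (S.rlo j) where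
  lie_sq := by
    rw [ad_ee_sq, lie_ad_of_mem_gev S.E_even (homIn_of_mem_godd S.f_odd), S.ospEf]
  lower_eq_zero := S.rlo_ker j
  lower_raise := by
    have anticomm : S.br S.ee (S.br S.fe (S.rlo j)) =
        S.br (S.br S.ee S.fe) (S.rlo j) - S.br S.fe (S.br S.ee (S.rlo j)) :=
      congr($(ad_mul_ad_of_mem_godd S.e_odd S.f_odd) (S.rlo j))
    rw [S.rlo_ker, map_zero, S.ospef, map_neg, LinearMap.neg_apply, br_He_rlo, neg_smul,
      neg_neg] at anticomm
    exact (sub_eq_zero.1 anticomm.symm).symm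

lemma B_pow_rhi_smul_pow_rlo (j : S.Jf) {n : ℕ} (hn : n ≤ 2 * S.deg2 j) :
    S.B ((S.ad S.fe ^ n) (S.rhi j)) (S.Cjn j n • (S.ad S.ee ^ n) (S.rlo j)) = 1 := by
  rw [← S.rup_def, ← S.rdn_def j n hn, S.dualpair j n j n hn hn, if_pos ⟨rfl, rfl⟩]

end SS

theorem statement15_general {K V : Type*} [Field K] [AddCommGroup V] [Module K V]
    {B : V →ₗ[K] V →ₗ[K] K} {e f : Module.End K V} {d n : ℕ} {u v : V} {s c : K}
    (hv : IsOspLowestWeightVector e f (d : K) v)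
    (hf : B.IsSkewAdjoint (f ^ 2 : Module.End K V))
    (hu : ∀ y, B (f u) y = -s * B u (f y)) (hs : s * s = 1) (huv : B u v = 1)
    (hc : B ((f ^ n) u) (c • (e ^ n) v) = 1) :
    c =
      if Even n then
        1 / (((n / 2).factorial : K) ^ 2 * (d.choose (n / 2) : K))
      else
        -s / ((((n / 2) + 1).factorial : K) * ((n / 2).factorial : K)
          * (d.choose (n / 2 + 1) : K)) := by
  rw [map_smul, smul_eq_mul] at hc
  obtain ⟨m, rfl | rfl⟩ := n.even_or_odd'
  · rw [if_pos (even_two_mul m), Nat.mul_div_cancel_left m two_pos]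
    rw [hv.pairing_even_natCast hf, huv, mul_one] at hc
    exact eq_one_div_of_mul_eq_one_left hc
  · rw [if_neg (Nat.not_even_two_mul_add_one m), show (2 * m + 1) / 2 = m by lia]
    rw [hv.pairing_odd_natCast hf hu, huv, mul_one] at hc
    have pairing_ne_zero := right_ne_zero_of_mul (right_ne_zero_of_mul_eq_one hc)
    rw [eq_div_iff pairing_ne_zero]
    linear_combination -s * hc - c * ((m + 1).factorial * m.factorial * d.choose (m + 1)) * hs

/-- **Lemma 6.2**: the normalizing constants C_{j,n} of the dual basis
r_j^n = C_{j,n}(ad e)^n r_j, characterized by (r^i_m | r^n_j) = δ_{m,n}δ_{i,j}, are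
C_{j,2m} = 1/((m!)² binom(2α_j, m)) and C_{j,2m+1} = -s(j)/((m+1)! m! binom(2α_j, m+1)). -/
theorem statement15 (S : SS) (j : S.Jf) (n : ℕ) (hn : n ≤ 2 * S.deg2 j) :
    S.Cjn j n =
      if Even n then
        1 / (((n / 2).factorial : ℂ) ^ 2 * ((S.deg2 j).choose (n / 2) : ℂ))
      else
        - S.sj j / ((((n / 2) + 1).factorial : ℂ) * ((n / 2).factorial : ℂ)
          * ((S.deg2 j).choose (n / 2 + 1) : ℂ)) := by
  exact statement15_general (S.isOspLowestWeightVector_rlo j) S.isSkewAdjoint_ad_fe_sq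
    (SS.B_ad_of_mem_godd S.f_odd (S.rhi_parity j)) (SS.mul_self_eq_one_of_homIn (S.rhi_parity j))
    ((S.pairrr j j).trans (if_pos rfl)) (S.B_pow_rhi_smul_pow_rlo j hn)

end
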